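/- There is a constant C > 0 such that the following holds for all positive integers r, a, n, N, N' with r ≥ 2a, n ≥ (r/a)², and N ≥ 2^{C·n·a²·r^{−1}·log(r/a)}·N'. Suppose the edges of the grid graph Γ_{N,r} are colored red and blue in such a way that every vertical edge (an edge between two vertices in the same column) is red. Then either there is a blue K_n, or there exist a set X of N' columns, a column x ∈ X, and a set Y of a rows such that for every column x' ∈ X with x' ≠ x and every row y ∈ Y, the horizontal edge between (x,y) and (x',y) is red. -/

import Mathlib

/-- Adjacency in the grid graph `K_m □ K_n`. -/
def GridAdj {m n : ℕ} (p q : Fin m × Fin n) : Prop :=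
  (p.1 = q.1 ∧ p.2 ≠ q.2) ∨ (p.1 ≠ q.1 ∧ p.2 = q.2)

/-- A blue `K_n` in an edge-coloring of `Γ_{N,r}`: `n` pairwise-adjacent vertices with
all edges between them blue (blue = `false`). -/
def HasBlueGridClique (N r n : ℕ) (χ : Sym2 (Fin N × Fin r) → Bool) : Prop :=
  ∃ S : Finset (Fin N × Fin r), S.card = n ∧
    ∀ p ∈ S, ∀ q ∈ S, p ≠ q → GridAdj p q ∧ χ s(p, q) = false

/-
View the horizontal edges as a family of blue graphs on the columns, one graph per row. If there is
no red star, the pairs of columns that are red in at least `a` rows form a graph of degree at most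
`N' * 2 ^ r`, so a large set `W` of columns is independent in it. In `W`, choose between `3a/2` and
`2a` rows of red density `O(a / r)`, and in each of them a largest blue clique `I y` among the
columns of low red degree. Most columns have low red degree in most of these rows and are red to at
most `k = O(n a² / r)` of the vertices of the cliques, so there are few choices for the rows in
which a column is low and for its red pattern towards the cliques. A class `F` of columns sharing
both is small: as the cliques are largest, the red pattern bounds the sum of the blue clique
numbers of `F` over the chosen rows by `k`, while each pair of columns in `F` is blue in a constant
fraction of these rows, so a Ramsey argument gives `|F| ≤ 2 ^ (8k)`.
-/

section GridIteration

open Finset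

variable {α β ι V : Type*}

lemma mul_card_filter_mul_lt_le {s : Finset α} {f : α → ℕ} {m : ℕ}
    (h : ∑ x ∈ s, f x ≤ #s * m) (t : ℕ) : t * #{x ∈ s | t * m < f x} ≤ #s := by
  rcases m.eq_zero_or_pos with rfl | hm
  · have hf : ∀ x ∈ s, f x = 0 := by simpa using h
    have hempty : {x ∈ s | t * 0 < f x} = ∅ :=
      filter_eq_empty_iff.mpr fun x hx => by simp [hf x hx]
    rw [hempty, card_empty, mul_zero]
    exact Nat.zero_le _
  · refine Nat.le_of_mul_le_mul_right ?_ hm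
    calc t * #{x ∈ s | t * m < f x} * m
        = #{x ∈ s | t * m < f x} • (t * m) := by rw [smul_eq_mul]; ring
      _ ≤ ∑ x ∈ s with t * m < f x, f x :=
          card_nsmul_le_sum _ _ _ fun x hx => (mem_filter.mp hx).2.le
      _ ≤ ∑ x ∈ s, f x := sum_le_sum_of_subset (filter_subset _ _)
      _ ≤ #s * m := h

lemma mul_card_filter_mul_lt_mul_card_le {p : α → β → Prop} [∀ x y, Decidable (p x y)]
    {s : Finset α} {t : Finset β} {c d m : ℕ} (hp : ∀ y ∈ t, c * #{x ∈ s | p x y} ≤ d)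
    (hd : #t * d ≤ #s * m) (k : ℕ) :
    k * #{x ∈ s | k * m < c * #{y ∈ t | p x y}} ≤ #s := by
  refine mul_card_filter_mul_lt_le ?_ k
  calc ∑ x ∈ s, c * #{y ∈ t | p x y} = ∑ y ∈ t, c * #{x ∈ s | p x y} := by
        rw [← mul_sum, ← mul_sum]
        exact congrArg (c * ·) (sum_card_bipartiteAbove_eq_sum_card_bipartiteBelow p)
    _ ≤ #t * d := sum_le_card_nsmul _ _ _ hp
    _ ≤ #s * m := hd

lemma one_add_pow_le_two_rpow {x : ℝ} (hx : 0 ≤ x) (m : ℕ) :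
    (1 + x) ^ m ≤ (2 : ℝ) ^ (2 * (m * x)) := by
  calc (1 + x) ^ m ≤ Real.exp x ^ m := by
        gcongr
        linarith [Real.add_one_le_exp x]
    _ = Real.exp (m * x) := (Real.exp_nat_mul x m).symm
    _ ≤ Real.exp (Real.log 2 * (2 * (m * x))) := by
        have hmx : 0 ≤ m * x := by positivity
        exact Real.exp_le_exp.mpr (by nlinarith [Real.log_two_gt_d9])
    _ = (2 : ℝ) ^ (2 * (m * x)) := (Real.rpow_def_of_pos two_pos _).symm

lemma card_powerset_filter_card_le_le_two_rpow (U : Finset α) (k : ℕ) {q : ℝ} (hq : 1 ≤ q) :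
    (#{S ∈ U.powerset | #S ≤ k} : ℝ) ≤ (2 : ℝ) ^ (k * Real.logb 2 q + 2 * (#U * q⁻¹)) := by
  have hq0 : 0 < q := by linarith
  have hweighted : (#{S ∈ U.powerset | #S ≤ k} : ℝ) * q⁻¹ ^ k ≤ (1 + q⁻¹) ^ #U := by
    calc (#{S ∈ U.powerset | #S ≤ k} : ℝ) * q⁻¹ ^ k
        = ∑ S ∈ U.powerset with #S ≤ k, q⁻¹ ^ k := by rw [sum_const, nsmul_eq_mul]
      _ ≤ ∑ S ∈ U.powerset with #S ≤ k, q⁻¹ ^ #S := sum_le_sum fun S hS =>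
          pow_le_pow_of_le_one (by positivity) (inv_le_one_of_one_le₀ hq) (mem_filter.mp hS).2
      _ ≤ ∑ S ∈ U.powerset, q⁻¹ ^ #S :=
          sum_le_sum_of_subset_of_nonneg (filter_subset _ _) fun _ _ _ => by positivity
      _ = (1 + q⁻¹) ^ #U := by simpa using (prod_one_add (f := fun _ => q⁻¹) U).symm
  have hpow : (2 : ℝ) ^ (k * Real.logb 2 q) = q ^ k := by
    rw [mul_comm, Real.rpow_mul zero_le_two, Real.rpow_logb two_pos (by norm_num) hq0,
      Real.rpow_natCast]
  calc (#{S ∈ U.powerset | #S ≤ k} : ℝ)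
      = q ^ k * (#{S ∈ U.powerset | #S ≤ k} * q⁻¹ ^ k) := by
        rw [mul_left_comm, ← mul_pow, mul_inv_cancel₀ hq0.ne', one_pow, mul_one]
    _ ≤ q ^ k * (2 : ℝ) ^ (2 * (#U * q⁻¹)) := by
        gcongr
        exact hweighted.trans (one_add_pow_le_two_rpow (by positivity) _)
    _ = (2 : ℝ) ^ (k * Real.logb 2 q + 2 * (#U * q⁻¹)) := by
        rw [Real.rpow_add two_pos, hpow]

lemma exists_isIndepSet_card_le_mul [Fintype V] (H : SimpleGraph V) [DecidableRel H.Adj] {d : ℕ}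
    (hd : ∀ v, H.degree v ≤ d) :
    ∃ W : Finset V, H.IsIndepSet W ∧ Fintype.card V ≤ #W * (d + 1) := by
  classical
  obtain ⟨W, hW⟩ := H.maximumIndepSet_exists
  have hdominates : univ ⊆ W.biUnion fun w => insert w (H.neighborFinset w) := by
    intro v _
    by_contra hv
    simp only [mem_biUnion, mem_insert, SimpleGraph.mem_neighborFinset, not_exists, not_and,
      not_or] at hv
    have hinsert : H.IsIndepSet (insert v W : Finset V) := by
      rw [coe_insert]
      exact Set.Pairwise.insert hW.isIndepSet
        fun w hw _ => ⟨fun h => (hv w hw).2 h.symm, (hv w hw).2⟩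
    have hcard := hW.maximum _ hinsert
    rw [card_insert_of_notMem fun h => (hv v h).1 rfl] at hcard
    omega
  refine ⟨W, hW.isIndepSet, (card_le_card hdominates).trans <| card_biUnion_le_card_mul _ _ _ ?_⟩
  exact fun w _ => (card_insert_le _ _).trans (Nat.succ_le_succ (hd w))

/-- The clique number of the subgraph of `G` induced on `W`. -/
noncomputable def cliqueNumOn (G : SimpleGraph V) (W : Finset V) : ℕ :=
  (G.induce (W : Set V)).cliqueNum

/-- `I` is a largest clique of `G` among those contained in `W`. -/
structure IsMaxCliqueOn (G : SimpleGraph V) (W I : Finset V) : Prop where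
  subset : I ⊆ W
  isClique : G.IsClique I
  card_eq : #I = cliqueNumOn G W

lemma exists_isMaxCliqueOn (G : SimpleGraph V) (W : Finset V) : ∃ I, IsMaxCliqueOn G W I := by
  obtain ⟨J, hJ⟩ := (G.induce (W : Set V)).exists_isNClique_cliqueNum
  rw [SimpleGraph.isNClique_induce_iff] at hJ
  refine ⟨_, fun v hv => ?_, hJ.isClique, hJ.card_eq⟩
  obtain ⟨w, -, rfl⟩ := mem_map.mp hv
  exact w.2

lemma card_le_cliqueNumOn {G : SimpleGraph V} {W J : Finset V} (hJW : J ⊆ W)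
    (hJ : G.IsClique J) : #J ≤ cliqueNumOn G W := by
  classical
  have hmap : (J.subtype (· ∈ (W : Set V))).map (.subtype _) = J :=
    subtype_map_of_mem fun v hv => hJW hv
  have hclique : (G.induce (W : Set V)).IsNClique #J (J.subtype (· ∈ (W : Set V))) := by
    rw [SimpleGraph.isNClique_induce_iff, hmap]
    exact ⟨hJ, rfl⟩
  rw [← hclique.card_eq]
  exact SimpleGraph.IsClique.card_le_cliqueNum (tc := hclique.isClique)

lemma cliqueNumOn_add_card_le_of_join {G : SimpleGraph V} {W W' K : Finset V}
    (hW' : W' ⊆ W) (hKW : K ⊆ W) (hK : G.IsClique K) (hadj : ∀ x ∈ K, ∀ v ∈ W', G.Adj x v) :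
    cliqueNumOn G W' + #K ≤ cliqueNumOn G W := by
  classical
  obtain ⟨J, hJ⟩ := exists_isMaxCliqueOn G W'
  have hdisj : Disjoint J K := disjoint_left.mpr fun v hvJ hvK =>
    G.loopless.irrefl v (hadj v hvK v (hJ.subset hvJ))
  have hunion : G.IsClique (J ∪ K : Finset V) := by
    have : Std.Symm G.Adj := ⟨fun _ _ h => h.symm⟩
    rw [coe_union, SimpleGraph.IsClique, Set.pairwise_union_of_symm]
    exact ⟨hJ.isClique, hK, fun v hv x hx _ => (hadj x hx v (hJ.subset hv)).symm⟩
  rw [← hJ.card_eq, ← card_union_of_disjoint hdisj]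
  exact card_le_cliqueNumOn (union_subset (hJ.subset.trans hW') hKW) hunion

lemma IsMaxCliqueOn.card_lt {G : SimpleGraph V} {W I : Finset V} (hI : IsMaxCliqueOn G W I)
    {n : ℕ} (hG : G.CliqueFree n) : #I < n := by
  by_contra! hn
  exact hG.mono hn I ⟨hI.isClique, rfl⟩

lemma sum_cliqueNumOn_add_card_le {G : ι → SimpleGraph V} {W W' : Finset V} {M R : Finset ι}
    {x : V} (hx : x ∈ W) (hW' : W' ⊆ W) (hR : R ⊆ M)
    (hadj : ∀ y ∈ R, ∀ v ∈ W', (G y).Adj x v) :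
    ∑ y ∈ M, cliqueNumOn (G y) W' + #R ≤ ∑ y ∈ M, cliqueNumOn (G y) W := by
  classical
  rw [← inter_eq_right.mpr hR, card_eq_sum_ones, ← sum_ite_mem, ← sum_add_distrib]
  refine sum_le_sum fun y _ => ?_
  split_ifs with hy
  · exact cliqueNumOn_add_card_le_of_join (K := {x}) hW' (by simpa using hx) (by simp)
      (by simpa using hadj y hy)
  · exact cliqueNumOn_add_card_le_of_join (K := ∅) hW' (by simp) (by simp) (by simp)

/- Sort the other vertices by the set of rows joining them to `x ∈ W`. A class joined to `x` in at
least `b` rows loses at least `b` in the sum, since `x` extends its cliques in those rows; this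
pays for the `2 ^ #M` classes because `#M < c * b`. -/
open scoped Classical in
lemma card_le_two_pow_mul_sum_cliqueNumOn {G : ι → SimpleGraph V} {M : Finset ι} {b c : ℕ}
    (hM : #M < c * b) (W : Finset V)
    (hW : (W : Set V).Pairwise fun v w => b ≤ #{y ∈ M | (G y).Adj v w}) :
    #W ≤ 2 ^ (c * ∑ y ∈ M, cliqueNumOn (G y) W) := by
  induction W using Finset.strongInduction with
  | H W ih =>
  rcases le_or_gt #W 1 with hle | hlt
  · exact hle.trans Nat.one_le_two_pow
  obtain ⟨x, hx⟩ := card_pos.mp (zero_lt_one.trans hlt)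
  have hfiber : ∀ R ∈ M.powerset,
      2 ^ (c * b) * #{v ∈ W.erase x | {y ∈ M | (G y).Adj x v} = R}
        ≤ 2 ^ (c * ∑ y ∈ M, cliqueNumOn (G y) W) := by
    intro R hR
    set F : Finset V := {v ∈ W.erase x | {y ∈ M | (G y).Adj x v} = R}
    rcases F.eq_empty_or_nonempty with hempty | ⟨v, hv⟩
    · simp [hempty]
    have hFW : F ⊂ W := (filter_subset _ _).trans_ssubset (erase_ssubset hx)
    obtain ⟨hvW, hvR⟩ := mem_filter.mp hv
    have hbR : b ≤ #R := by
      rw [← hvR]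
      exact hW hx (mem_of_mem_erase hvW) (ne_of_mem_erase hvW).symm
    have hdrop : ∑ y ∈ M, cliqueNumOn (G y) F + #R ≤ ∑ y ∈ M, cliqueNumOn (G y) W :=
      sum_cliqueNumOn_add_card_le hx hFW.subset (mem_powerset.mp hR) fun y hy w hw => by
        rw [← (mem_filter.mp hw).2] at hy
        exact (mem_filter.mp hy).2
    calc 2 ^ (c * b) * #F ≤ 2 ^ (c * b) * 2 ^ (c * ∑ y ∈ M, cliqueNumOn (G y) F) := by
          gcongr
          exact ih F hFW (hW.mono (coe_subset.mpr hFW.subset))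
      _ = 2 ^ (c * (b + ∑ y ∈ M, cliqueNumOn (G y) F)) := by rw [← pow_add, mul_add]
      _ ≤ 2 ^ (c * ∑ y ∈ M, cliqueNumOn (G y) W) := by gcongr <;> omega
  have hsum : 2 ^ (c * b) * #(W.erase x) ≤ 2 ^ #M * 2 ^ (c * ∑ y ∈ M, cliqueNumOn (G y) W) := by
    rw [card_eq_sum_card_fiberwise (f := fun v => {y ∈ M | (G y).Adj x v})
      (t := M.powerset) fun v _ => mem_powerset.mpr (filter_subset _ _), mul_sum]
    simpa using sum_le_card_nsmul _ _ _ hfiber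
  have hhalf : 2 * #(W.erase x) ≤ 2 ^ (c * ∑ y ∈ M, cliqueNumOn (G y) W) := by
    refine Nat.le_of_mul_le_mul_left ?_ (Nat.two_pow_pos #M)
    calc 2 ^ #M * (2 * #(W.erase x)) = 2 ^ (#M + 1) * #(W.erase x) := by ring
      _ ≤ 2 ^ (c * b) * #(W.erase x) := by gcongr <;> omega
      _ ≤ _ := hsum
  have := card_erase_of_mem hx
  omega

open scoped Classical in
/-- The rows in which the pair `v, w` is red, when `G y` is the graph of blue edges of row `y`.
Every row counts as red for `v = w`. -/
noncomputable def redRows [Fintype ι] (G : ι → SimpleGraph V) (v w : V) : Finset ι :=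
  {y | ¬ (G y).Adj v w}

lemma redRows_comm [Fintype ι] (G : ι → SimpleGraph V) (v w : V) :
    redRows G v w = redRows G w v := by
  classical exact filter_congr fun y _ => not_congr ((G y).adj_comm v w)

/-- The graph of the pairs of columns that are red in at least `a` rows. -/
def redPairGraph [Fintype ι] (G : ι → SimpleGraph V) (a : ℕ) : SimpleGraph V where
  Adj v w := v ≠ w ∧ a ≤ #(redRows G v w)
  symm := ⟨fun v w h => ⟨h.1.symm, redRows_comm G v w ▸ h.2⟩⟩
  loopless := ⟨fun _ h => h.1 rfl⟩

lemma card_redRows_lt [Fintype ι] {G : ι → SimpleGraph V} {a : ℕ} {W : Finset V}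
    (hW : (redPairGraph G a).IsIndepSet W) {v w : V} (hv : v ∈ W) (hw : w ∈ W) (hvw : v ≠ w) :
    #(redRows G v w) < a :=
  not_le.mp fun hle => hW hv hw hvw ⟨hvw, hle⟩

open scoped Classical in
/-- The number of red neighbours of `v` in `W`, when `G` is the graph of blue edges. A vertex of
`W` counts as a red neighbour of itself. -/
noncomputable def redDegree (G : SimpleGraph V) (W : Finset V) (v : V) : ℕ :=
  #{w ∈ W | ¬ G.Adj v w}

/-- The vertices of `W` which are red to at most a `d / r` fraction of `W`. -/
noncomputable def lowVertices (G : SimpleGraph V) (W : Finset V) (r d : ℕ) : Finset V :=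
  {v ∈ W | r * redDegree G W v ≤ d * #W}

open scoped Classical in
/-- The red pattern of `v` towards the sets `I y` placed in the rows `y ∈ M`: the grid vertices
`(y, x)` with `x ∈ I y` that are red to `v` in row `y`. -/
noncomputable def redPattern (G : ι → SimpleGraph V) (M : Finset ι) (I : ι → Finset V) (v : V) :
    Finset (Σ _ : ι, V) :=
  {c ∈ M.sigma I | ¬ (G c.1).Adj c.2 v}

lemma sum_redDegree_le [Fintype ι] {G : ι → SimpleGraph V} {W : Finset V} {a : ℕ} (ha : 0 < a)
    (hW : (redPairGraph G a).IsIndepSet W)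
    (hcard : Fintype.card ι ≤ #W) {v : V} (hv : v ∈ W) :
    ∑ y, redDegree (G y) W v ≤ a * #W := by
  classical
  calc ∑ y, redDegree (G y) W v = ∑ w ∈ W, #(redRows G v w) :=
        sum_card_bipartiteAbove_eq_sum_card_bipartiteBelow fun y w => ¬ (G y).Adj v w
    _ = #(redRows G v v) + ∑ w ∈ W.erase v, #(redRows G v w) := (add_sum_erase _ _ hv).symm
    _ ≤ #W + #(W.erase v) * (a - 1) := by
        gcongr
        · exact (card_le_univ _).trans hcard
        · refine sum_le_card_nsmul _ _ _ fun w hw => Nat.le_sub_one_of_lt ?_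
          exact card_redRows_lt hW hv (mem_of_mem_erase hw) (ne_of_mem_erase hw).symm
    _ ≤ #W + #W * (a - 1) := by
        gcongr
        exact erase_subset _ _
    _ = a * #W := by
        obtain ⟨a, rfl⟩ := Nat.exists_eq_add_of_lt ha
        simp only [zero_add, Nat.add_sub_cancel]
        ring

lemma exists_sparse_rows [Fintype ι] {G : ι → SimpleGraph V} {W : Finset V} {a : ℕ} (ha : 0 < a)
    (har : 2 * a ≤ Fintype.card ι) (hW : (redPairGraph G a).IsIndepSet W)
    (hcard : Fintype.card ι ≤ #W) :
    ∃ M : Finset ι, 3 * a ≤ 2 * #M ∧ #M ≤ 2 * a ∧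
      ∀ y ∈ M, ∑ v ∈ W, Fintype.card ι * redDegree (G y) W v ≤ #W * (4 * a * #W) := by
  classical
  set r := Fintype.card ι
  have htotal : ∑ y, ∑ v ∈ W, r * redDegree (G y) W v ≤ #(univ : Finset ι) * (#W * (a * #W)) := by
    simp only [← mul_sum, card_univ]
    rw [sum_comm]
    gcongr
    exact sum_le_card_nsmul _ _ _ fun v hv => sum_redDegree_le ha hW hcard hv
  have hdense := mul_card_filter_mul_lt_le htotal 4
  have hsplit := card_filter_add_card_filter_not (s := (univ : Finset ι))
    fun y => 4 * (#W * (a * #W)) < ∑ v ∈ W, r * redDegree (G y) W v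
  rw [card_univ] at hdense hsplit
  obtain ⟨M, hM, hMcard⟩ := exists_subset_card_eq
    (s := {y | ¬ 4 * (#W * (a * #W)) < ∑ v ∈ W, r * redDegree (G y) W v})
    (n := (3 * a + 1) / 2) (by omega)
  refine ⟨M, by omega, by omega, fun y hy => ?_⟩
  calc ∑ v ∈ W, r * redDegree (G y) W v ≤ 4 * (#W * (a * #W)) :=
        not_lt.mp (mem_filter.mp (hM hy)).2
    _ = #W * (4 * a * #W) := by ring

lemma mul_card_notMem_lowVertices_le [DecidableEq V] {G : SimpleGraph V} {W : Finset V} {r d : ℕ}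
    (hG : ∑ v ∈ W, r * redDegree G W v ≤ #W * (d * #W)) (t : ℕ) :
    t * #{v ∈ W | v ∉ lowVertices G W r (t * d)} ≤ #W := by
  refine le_of_eq_of_le ?_ (mul_card_filter_mul_lt_le hG t)
  congr 2
  refine filter_congr fun v hv => ?_
  simp only [lowVertices, mem_filter, hv, true_and, not_le, mul_assoc]

lemma four_mul_card_mostly_notMem_le [DecidableEq V] {W : Finset V} {M : Finset ι}
    {L : ι → Finset V} {a : ℕ} (hM : #M ≤ 2 * a)
    (hL : ∀ y ∈ M, 32 * #{v ∈ W | v ∉ L y} ≤ #W) :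
    4 * #{v ∈ W | a < 4 * #{y ∈ M | v ∉ L y}} ≤ #W := by
  have hd : #M * #W ≤ #W * (2 * a) := by
    rw [mul_comm #W]
    gcongr
  refine le_of_eq_of_le ?_ (mul_card_filter_mul_lt_mul_card_le hL hd 4)
  congr 2
  exact filter_congr fun v _ => by omega

lemma four_mul_card_large_redPattern_le {G : ι → SimpleGraph V} {W : Finset V} {M : Finset ι}
    {I : ι → Finset V} {a n r : ℕ} (hM : #M ≤ 2 * a) (hIn : ∀ y ∈ M, #(I y) ≤ n)
    (hI : ∀ y ∈ M, I y ⊆ lowVertices (G y) W r (128 * a)) :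
    4 * #{v ∈ W | 1024 * n * a ^ 2 < r * #(redPattern G M I v)} ≤ #W := by
  classical
  have hdeg : ∀ c ∈ M.sigma I, r * #{v ∈ W | ¬ (G c.1).Adj c.2 v} ≤ 128 * a * #W := by
    intro c hc
    obtain ⟨hy, hx⟩ := mem_sigma.mp hc
    exact (mem_filter.mp (hI _ hy hx)).2
  have hpositions : #(M.sigma I) ≤ 2 * a * n := by
    rw [card_sigma]
    exact (sum_le_card_nsmul _ _ _ hIn).trans (Nat.mul_le_mul_right n hM)
  have hd : #(M.sigma I) * (128 * a * #W) ≤ #W * (256 * n * a ^ 2) :=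
    (Nat.mul_le_mul_right _ hpositions).trans_eq (by ring)
  refine le_of_eq_of_le ?_
    (mul_card_filter_mul_lt_mul_card_le (p := fun v c => ¬ (G c.1).Adj c.2 v) hdeg hd 4)
  congr 2
  refine filter_congr fun v _ => ?_
  rw [show 4 * (256 * n * a ^ 2) = 1024 * n * a ^ 2 by ring]
  rfl

lemma card_le_two_mul_card_typical [DecidableEq V] {G : ι → SimpleGraph V} {W : Finset V}
    {M : Finset ι} {I : ι → Finset V} {a n r : ℕ} (hM : #M ≤ 2 * a)
    (hsparse : ∀ y ∈ M, ∑ v ∈ W, r * redDegree (G y) W v ≤ #W * (4 * a * #W))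
    (hI : ∀ y ∈ M, I y ⊆ lowVertices (G y) W r (128 * a)) (hIn : ∀ y ∈ M, #(I y) ≤ n) :
    #W ≤ 2 * #{v ∈ W | 4 * #{y ∈ M | v ∉ lowVertices (G y) W r (128 * a)} ≤ a ∧
      r * #(redPattern G M I v) ≤ 1024 * n * a ^ 2} := by
  have hlow : ∀ y ∈ M, 32 * #{v ∈ W | v ∉ lowVertices (G y) W r (128 * a)} ≤ #W := by
    intro y hy
    rw [show 128 * a = 32 * (4 * a) by ring]
    exact mul_card_notMem_lowVertices_le (hsparse y hy) 32
  have hmostly := four_mul_card_mostly_notMem_le hM hlow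
  have hpattern := four_mul_card_large_redPattern_le hM hIn hI
  have hsplit := card_filter_add_card_filter_not (s := W) fun v =>
    4 * #{y ∈ M | v ∉ lowVertices (G y) W r (128 * a)} ≤ a ∧
      r * #(redPattern G M I v) ≤ 1024 * n * a ^ 2
  simp only [not_and_or, not_le, filter_or] at hsplit
  have hunion := card_union_le {v ∈ W | a < 4 * #{y ∈ M | v ∉ lowVertices (G y) W r (128 * a)}}
    {v ∈ W | 1024 * n * a ^ 2 < r * #(redPattern G M I v)}
  omega

/- Adding `F` to the part of `I y` outside `S` gives cliques inside `L y`, which are no larger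
than `I y`; so the part of `I y` inside `S` pays for the clique number of `F`. -/
lemma sum_cliqueNumOn_le_card_of_redPattern_subset {G : ι → SimpleGraph V} {M M' : Finset ι}
    {I L : ι → Finset V} {F : Finset V} {S : Finset (Σ _ : ι, V)} (hM' : M' ⊆ M)
    (hI : ∀ y ∈ M', IsMaxCliqueOn (G y) (L y) (I y)) (hFL : ∀ y ∈ M', F ⊆ L y)
    (hFS : ∀ v ∈ F, redPattern G M I v ⊆ S) :
    ∑ y ∈ M', cliqueNumOn (G y) F ≤ #S := by
  classical
  have hrow : ∀ y ∈ M', cliqueNumOn (G y) F ≤ #{x ∈ I y | ⟨y, x⟩ ∈ S} := by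
    intro y hy
    have hjoin : cliqueNumOn (G y) F + #{x ∈ I y | ⟨y, x⟩ ∉ S} ≤ cliqueNumOn (G y) (L y) := by
      refine cliqueNumOn_add_card_le_of_join (hFL y hy)
        ((filter_subset _ _).trans (hI y hy).subset)
        ((hI y hy).isClique.subset (coe_subset.mpr (filter_subset _ _))) fun x hx v hv => ?_
      obtain ⟨hxI, hxS⟩ := mem_filter.mp hx
      by_contra hred
      exact hxS (hFS v hv (mem_filter.mpr ⟨mem_sigma.mpr ⟨hM' hy, hxI⟩, hred⟩))
    have hsplit := card_filter_add_card_filter_not (s := I y) fun x => (⟨y, x⟩ : Σ _ : ι, V) ∈ S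
    rw [(hI y hy).card_eq] at hsplit
    omega
  calc ∑ y ∈ M', cliqueNumOn (G y) F ≤ ∑ y ∈ M', #{x ∈ I y | ⟨y, x⟩ ∈ S} := sum_le_sum hrow
    _ = #(M'.sigma fun y => {x ∈ I y | ⟨y, x⟩ ∈ S}) := (card_sigma _ _).symm
    _ ≤ #S := card_le_card fun c hc => (mem_filter.mp (mem_sigma.mp hc).2).2

lemma card_le_two_pow_of_isIndepSet [Fintype ι] {G : ι → SimpleGraph V} {F : Finset V}
    {M : Finset ι} {a : ℕ} (hF : (redPairGraph G a).IsIndepSet F)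
    (hM : 5 * a ≤ 4 * #M) : #F ≤ 2 ^ (8 * ∑ y ∈ M, cliqueNumOn (G y) F) := by
  classical
  refine card_le_two_pow_mul_sum_cliqueNumOn (b := #M + 1 - a) (by omega) F fun v hv w hw hvw => ?_
  have hred : #{y ∈ M | ¬ (G y).Adj v w} ≤ #(redRows G v w) :=
    card_le_card (filter_subset_filter _ (subset_univ M))
  have hlt : #(redRows G v w) < a := card_redRows_lt hF hv hw hvw
  have hsplit := card_filter_add_card_filter_not (s := M) fun y => (G y).Adj v w
  omega

lemma card_le_of_redPattern_card_le [Fintype ι] [DecidableEq V] {G : ι → SimpleGraph V}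
    {T : Finset V} {M : Finset ι} {I L : ι → Finset V} {a k : ℕ}
    (hT : (redPairGraph G a).IsIndepSet T) (hM : 3 * a ≤ 2 * #M)
    (hI : ∀ y ∈ M, IsMaxCliqueOn (G y) (L y) (I y))
    (hlow : ∀ v ∈ T, 4 * #{y ∈ M | v ∉ L y} ≤ a) (hk : ∀ v ∈ T, #(redPattern G M I v) ≤ k) :
    #T ≤ 2 ^ (8 * k) * (2 ^ #M * #{S ∈ (M.sigma I).powerset | #S ≤ k}) := by
  classical
  rw [← card_powerset M, ← card_product]
  refine card_le_mul_card_image_of_maps_to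
    (f := fun v => (({y ∈ M | v ∈ L y} : Finset ι), redPattern G M I v)) (fun v hv => ?_) _ ?_
  · simp only [mem_product, mem_powerset, mem_filter]
    exact ⟨filter_subset _ _, filter_subset _ _, hk v hv⟩
  rintro ⟨M', S⟩ hMS
  simp only [mem_product, mem_powerset, mem_filter] at hMS
  obtain ⟨hM', -, hS⟩ := hMS
  set F : Finset V := {v ∈ T | (({y ∈ M | v ∈ L y} : Finset ι), redPattern G M I v) = (M', S)}
  have hmem : ∀ v ∈ F, v ∈ T ∧ {y ∈ M | v ∈ L y} = M' ∧ redPattern G M I v = S := fun v hv => by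
    simpa only [F, mem_filter, Prod.mk.injEq] using hv
  rcases F.eq_empty_or_nonempty with hempty | ⟨v₀, hv₀⟩
  · simp [hempty]
  have hM'card : 5 * a ≤ 4 * #M' := by
    obtain ⟨hv₀T, hv₀M', -⟩ := hmem v₀ hv₀
    have hfew := hlow v₀ hv₀T
    have hsplit := card_filter_add_card_filter_not (s := M) fun y => v₀ ∈ L y
    rw [hv₀M'] at hsplit
    omega
  have hFL : ∀ y ∈ M', F ⊆ L y := fun y hy v hv => by
    rw [← (hmem v hv).2.1] at hy
    exact (mem_filter.mp hy).2
  calc #F ≤ 2 ^ (8 * ∑ y ∈ M', cliqueNumOn (G y) F) :=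
        card_le_two_pow_of_isIndepSet (hT.mono (coe_subset.mpr (filter_subset _ _))) hM'card
    _ ≤ 2 ^ (8 * k) := by
        gcongr
        · exact one_le_two
        · exact (sum_cliqueNumOn_le_card_of_redPattern_subset hM' (fun y hy => hI y (hM' hy)) hFL
            fun v hv => (hmem v hv).2.2.subset).trans hS

lemma exists_card_le_card_powerset_filter [Fintype ι] {G : ι → SimpleGraph V} {W : Finset V}
    {a n : ℕ} (ha : 0 < a) (har : 2 * a ≤ Fintype.card ι) (hG : ∀ y, (G y).CliqueFree n)
    (hW : (redPairGraph G a).IsIndepSet W) (hcard : Fintype.card ι ≤ #W) :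
    ∃ U : Finset (Σ _ : ι, V), #U ≤ 2 * a * n ∧
      #W ≤ 2 * (2 ^ (8 * (1024 * n * a ^ 2 / Fintype.card ι)) *
        (2 ^ (2 * a) * #{S ∈ U.powerset | #S ≤ 1024 * n * a ^ 2 / Fintype.card ι})) := by
  classical
  obtain ⟨M, hMlower, hMupper, hsparse⟩ := exists_sparse_rows ha har hW hcard
  choose I hI using fun y =>
    exists_isMaxCliqueOn (G y) (lowVertices (G y) W (Fintype.card ι) (128 * a))
  have hIn : ∀ y ∈ M, #(I y) ≤ n := fun y _ => ((hI y).card_lt (hG y)).le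
  refine ⟨M.sigma I, ?_, ?_⟩
  · rw [card_sigma]
    exact (sum_le_card_nsmul _ _ _ hIn).trans (Nat.mul_le_mul_right n hMupper)
  refine (card_le_two_mul_card_typical hMupper hsparse (fun y _ => (hI y).subset) hIn).trans ?_
  gcongr 2 * ?_
  refine (card_le_of_redPattern_card_le (k := 1024 * n * a ^ 2 / Fintype.card ι)
    (hW.mono (coe_subset.mpr (filter_subset _ _))) hMlower (fun y _ => hI y)
    (fun v hv => (mem_filter.mp hv).2.1) fun v hv => ?_).trans ?_
  · rw [Nat.le_div_iff_mul_le (by omega), mul_comm]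
    exact (mem_filter.mp hv).2.2
  · gcongr
    exact one_le_two

lemma le_mul_sq_div_of_div_sq_le {r a n : ℝ} (hr : 0 < r) (ha : 0 < a) (hn : (r / a) ^ 2 ≤ n) :
    r ≤ n * a ^ 2 / r := by
  rw [div_pow, div_le_iff₀ (by positivity)] at hn
  rwa [le_div_iff₀ hr, ← sq]

lemma one_le_logb_two_div {r a : ℝ} (ha : 0 < a) (har : 2 * a ≤ r) : 1 ≤ Real.logb 2 (r / a) := by
  have htwo : 2 ≤ r / a := (le_div_iff₀ ha).mpr har
  rwa [Real.le_logb_iff_rpow_le one_lt_two (by linarith), Real.rpow_one]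

lemma card_le_two_rpow_of_isIndepSet_of_card_le [Fintype ι] {G : ι → SimpleGraph V} {W : Finset V}
    {a n : ℕ} (ha : 0 < a) (har : 2 * a ≤ Fintype.card ι)
    (hn : ((Fintype.card ι : ℝ) / a) ^ 2 ≤ n) (hG : ∀ y, (G y).CliqueFree n)
    (hW : (redPairGraph G a).IsIndepSet W) (hcard : Fintype.card ι ≤ #W) :
    (#W : ℝ) ≤ (2 : ℝ) ^ (9300 * (n * a ^ 2 / Fintype.card ι *
      Real.logb 2 (Fintype.card ι / a))) := by
  obtain ⟨U, hU, hcount⟩ := exists_card_le_card_powerset_filter ha har hG hW hcard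
  have haR : (0 : ℝ) < a := by exact_mod_cast ha
  have harR : 2 * (a : ℝ) ≤ Fintype.card ι := by exact_mod_cast har
  have hr1 : (1 : ℝ) ≤ Fintype.card ι := Nat.one_le_cast.mpr (by omega)
  set r := Fintype.card ι
  set k := 1024 * n * a ^ 2 / r
  set u : ℝ := n * a ^ 2 / r with hu
  set l : ℝ := Real.logb 2 (r / a)
  have hru : r ≤ u := le_mul_sq_div_of_div_sq_le (by linarith) haR hn
  have hl : 1 ≤ l := one_le_logb_two_div haR harR
  have hul : u ≤ u * l := le_mul_of_one_le_right (by linarith) hl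
  have hku : (k : ℝ) ≤ 1024 * u := by
    refine Nat.cast_div_le.trans_eq ?_
    rw [hu]
    push_cast
    ring
  have hUu : #U * ((r : ℝ) / a)⁻¹ ≤ 2 * u := by
    calc #U * ((r : ℝ) / a)⁻¹ ≤ (2 * a * n : ℕ) * ((r : ℝ) / a)⁻¹ := by gcongr
      _ = 2 * u := by
        rw [hu, inv_div]
        push_cast
        ring
  have hkl : k * l ≤ 1024 * (u * l) := by
    rw [← mul_assoc]
    gcongr
  calc (#W : ℝ) ≤ 2 * (2 ^ (8 * k) * (2 ^ (2 * a) * #{S ∈ U.powerset | #S ≤ k})) := by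
        exact_mod_cast hcount
    _ ≤ 2 * (2 ^ (8 * k) * (2 ^ (2 * a) * (2 : ℝ) ^ (k * l + 2 * (#U * ((r : ℝ) / a)⁻¹)))) := by
        gcongr
        exact card_powerset_filter_card_le_le_two_rpow U k ((one_le_div haR).mpr (by linarith))
    _ = (2 : ℝ) ^ (1 + (8 * k + (2 * a + (k * l + 2 * (#U * ((r : ℝ) / a)⁻¹))))) := by
        rw [Real.rpow_add two_pos 1, Real.rpow_one, Real.rpow_add two_pos (8 * k),
          Real.rpow_add two_pos (2 * a)]
        norm_cast
    -- The exponent is at most `(1 + 8 * 1024 + 1 + 1024 + 4) * (u * l)`.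
    _ ≤ (2 : ℝ) ^ (9300 * (u * l)) :=
        Real.rpow_le_rpow_of_exponent_le one_le_two (by linarith)

lemma card_le_two_rpow_of_isIndepSet [Fintype ι] {G : ι → SimpleGraph V} {W : Finset V} {a n : ℕ}
    (ha : 0 < a) (har : 2 * a ≤ Fintype.card ι) (hn : ((Fintype.card ι : ℝ) / a) ^ 2 ≤ n)
    (hG : ∀ y, (G y).CliqueFree n)
    (hW : (redPairGraph G a).IsIndepSet W) :
    (#W : ℝ) ≤ (2 : ℝ) ^ (9300 * (n * a ^ 2 / Fintype.card ι *
      Real.logb 2 (Fintype.card ι / a))) := by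
  rcases le_or_gt (Fintype.card ι) #W with hge | hlt
  · exact card_le_two_rpow_of_isIndepSet_of_card_le ha har hn hG hW hge
  have haR : (0 : ℝ) < a := by exact_mod_cast ha
  have harR : 2 * (a : ℝ) ≤ Fintype.card ι := by exact_mod_cast har
  have hru := le_mul_sq_div_of_div_sq_le (by linarith) haR hn
  have hul := le_mul_of_one_le_right (by linarith) (one_le_logb_two_div haR harR)
  calc (#W : ℝ) ≤ (2 : ℝ) ^ (Fintype.card ι : ℝ) := by
        rw [Real.rpow_natCast]
        exact_mod_cast (hlt.trans Nat.lt_two_pow_self).le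
    _ ≤ _ := Real.rpow_le_rpow_of_exponent_le one_le_two (by linarith)

/-- A red star with `s` vertices, centre included, whose edges are red in each of `a` common rows,
when `G y` is the graph of blue edges of row `y`. -/
def HasRedStar (G : ι → SimpleGraph V) (s a : ℕ) : Prop :=
  ∃ X : Finset V, #X = s ∧ ∃ x ∈ X, ∃ Y : Finset ι, #Y = a ∧
    ∀ x' ∈ X, x' ≠ x → ∀ y ∈ Y, ¬ (G y).Adj x x'

lemma hasRedStar_of_le_card {G : ι → SimpleGraph V} {s a : ℕ} (hs : 0 < s) {x : V} {Z : Finset V}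
    {R : Finset ι} (hx : x ∉ Z) (hZ : s ≤ #Z + 1) (hR : a ≤ #R)
    (hred : ∀ z ∈ Z, ∀ y ∈ R, ¬ (G y).Adj x z) : HasRedStar G s a := by
  classical
  obtain ⟨Z', hZ', hZ'card⟩ := exists_subset_card_eq (s := Z) (n := s - 1) (by omega)
  obtain ⟨Y, hY, hYcard⟩ := exists_subset_card_eq hR
  refine ⟨insert x Z', ?_, x, mem_insert_self _ _, Y, hYcard, fun z hz hzx y hy => ?_⟩
  · rw [card_insert_of_notMem fun h => hx (hZ' h)]
    omega
  · exact hred z (hZ' (mem_of_mem_insert_of_ne hz hzx)) y (hY hy)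

open scoped Classical in
lemma degree_redPairGraph_le [Fintype ι] [Fintype V] {G : ι → SimpleGraph V} {s a : ℕ}
    (hs : 0 < s) (hstar : ¬ HasRedStar G s a) (v : V) :
    (redPairGraph G a).degree v ≤ s * 2 ^ Fintype.card ι := by
  rw [← Fintype.card_finset, ← card_univ]
  refine card_le_mul_card_image_of_maps_to (f := redRows G v) (fun _ _ => mem_univ _) s
    fun R _ => ?_
  by_contra! hlt
  have hmem : ∀ w ∈ {w ∈ (redPairGraph G a).neighborFinset v | redRows G v w = R},
      (redPairGraph G a).Adj v w ∧ redRows G v w = R := fun w hw => by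
    simpa only [mem_filter, SimpleGraph.mem_neighborFinset] using hw
  obtain ⟨w₀, hw₀⟩ := card_pos.mp (hs.trans hlt)
  refine hstar (hasRedStar_of_le_card hs (fun hv => (hmem v hv).1.1 rfl)
    (hlt.le.trans (Nat.le_succ _)) ((hmem w₀ hw₀).2 ▸ (hmem w₀ hw₀).1.2) fun w hw y hy => ?_)
  rw [← (hmem w hw).2] at hy
  exact (mem_filter.mp hy).2

lemma card_lt_of_cliqueFree_of_not_hasRedStar [Fintype ι] [Fintype V] {G : ι → SimpleGraph V}
    {s a n : ℕ} (ha : 0 < a) (hs : 0 < s) (har : 2 * a ≤ Fintype.card ι)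
    (hn : ((Fintype.card ι : ℝ) / a) ^ 2 ≤ n) (hG : ∀ y, (G y).CliqueFree n)
    (hstar : ¬ HasRedStar G s a) :
    (Fintype.card V : ℝ) < (2 : ℝ) ^ (10000 * n * a ^ 2 / Fintype.card ι *
      Real.logb 2 (Fintype.card ι / a)) * s := by
  classical
  obtain ⟨W, hindep, hcover⟩ :=
    exists_isIndepSet_card_le_mul _ (degree_redPairGraph_le hs hstar)
  have hWcard := card_le_two_rpow_of_isIndepSet ha har hn hG hindep
  have haR : (0 : ℝ) < a := by exact_mod_cast ha
  have harR : 2 * (a : ℝ) ≤ Fintype.card ι := by exact_mod_cast har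
  have hr1 : (1 : ℝ) ≤ Fintype.card ι := Nat.one_le_cast.mpr (by omega)
  have hs1 : (1 : ℝ) ≤ s := Nat.one_le_cast.mpr hs
  have hru := le_mul_sq_div_of_div_sq_le (by linarith) haR hn
  have hul := le_mul_of_one_le_right (by linarith) (one_le_logb_two_div haR harR)
  set r := Fintype.card ι
  set e : ℝ := n * a ^ 2 / r * Real.logb 2 (r / a)
  have hpow : (1 : ℝ) ≤ 2 ^ r := one_le_pow₀ one_le_two
  calc (Fintype.card V : ℝ) ≤ #W * (s * 2 ^ r + 1) := by exact_mod_cast hcover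
    _ ≤ (2 : ℝ) ^ (9300 * e) * (2 ^ r * 2 * s) := by
        gcongr
        nlinarith
    _ = (2 : ℝ) ^ (9300 * e + (r + 1)) * s := by
        rw [Real.rpow_add two_pos, Real.rpow_add two_pos, Real.rpow_natCast, Real.rpow_one]
        ring
    _ < (2 : ℝ) ^ (10000 * n * a ^ 2 / r * Real.logb 2 (r / a)) * s := by
        gcongr ?_ * _
        refine Real.rpow_lt_rpow_of_exponent_lt one_lt_two ?_
        rw [show 10000 * n * a ^ 2 / r * Real.logb 2 (r / a) = 10000 * e by ring]
        linarith

/-- The blue edges of row `y`, as a graph on the columns; blue is `false`. -/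
def blueGraph (χ : Sym2 (V × ι) → Bool) (y : ι) : SimpleGraph V where
  Adj x x' := x ≠ x' ∧ χ s((x, y), (x', y)) = false
  symm := ⟨fun _ _ h => ⟨h.1.symm, (congrArg χ Sym2.eq_swap).trans h.2⟩⟩
  loopless := ⟨fun _ h => h.1 rfl⟩

lemma hasBlueGridClique_of_not_cliqueFree {N r n : ℕ} {χ : Sym2 (Fin N × Fin r) → Bool}
    {y : Fin r} (h : ¬ (blueGraph χ y).CliqueFree n) : HasBlueGridClique N r n χ := by
  simp only [SimpleGraph.CliqueFree, not_forall, not_not] at h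
  obtain ⟨J, hJ⟩ := h
  refine ⟨J.map ⟨(·, y), Prod.mk_left_injective y⟩, by rw [card_map, hJ.card_eq], ?_⟩
  simp only [forall_mem_map, Function.Embedding.coeFn_mk]
  intro x hx x' hx' hne
  obtain ⟨hxx', hblue⟩ := hJ.isClique hx hx' fun h => hne (by rw [h])
  exact ⟨Or.inr ⟨hxx', rfl⟩, hblue⟩

theorem grid_iteration_lemma_general :
    ∃ C : ℝ, 0 < C ∧ ∀ r a n N N' : ℕ, 0 < a → 0 < N' →
      2 * a ≤ r → ((r : ℝ) / a) ^ 2 ≤ (n : ℝ) →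
      (2 : ℝ) ^ (C * n * a ^ 2 / r * Real.logb 2 ((r : ℝ) / a)) * N' ≤ (N : ℝ) →
      ∀ χ : Sym2 (Fin N × Fin r) → Bool,
        (∃ y, ¬ (blueGraph χ y).CliqueFree n) ∨
          ∃ X : Finset (Fin N), X.card = N' ∧ ∃ x ∈ X, ∃ Y : Finset (Fin r),
            Y.card = a ∧ ∀ x' ∈ X, x' ≠ x → ∀ y ∈ Y,
              χ s((x, y), (x', y)) = true := by
  refine ⟨10000, by norm_num, fun r a n N N' ha hN' har hn hN χ => ?_⟩
  refine or_iff_not_imp_left.mpr fun hblue => ?_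
  have hstar : HasRedStar (blueGraph χ) N' a := by
    by_contra hstar
    have hlt := card_lt_of_cliqueFree_of_not_hasRedStar ha hN' (by simpa using har)
      (by simpa using hn) (by simpa using hblue) hstar
    simp only [Fintype.card_fin] at hlt
    exact hlt.not_ge hN
  obtain ⟨X, hX, x, hx, Y, hY, hred⟩ := hstar
  refine ⟨X, hX, x, hx, Y, hY, fun x' hx' hne y hy => ?_⟩
  exact Bool.eq_true_of_not_eq_false fun h => hred x' hx' hne y hy ⟨hne.symm, h⟩

end GridIteration

/-- There is `C > 0` such that for all positive integers `r, a, n, N, N'` with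
`r ≥ 2a`, `n ≥ (r/a)²` and `N ≥ 2^(C n a² r⁻¹ log₂(r/a)) · N'`: if the edges of
`Γ_{N,r}` are colored red/blue with every vertical edge red, then there is a blue `K_n`
or a set `X` of `N'` columns, a column `x ∈ X` and a set `Y` of `a` rows such that for
every `x' ∈ X` with `x' ≠ x` and every `y ∈ Y`, the horizontal edge between `(x,y)` and
`(x',y)` is red. -/
theorem grid_iteration_lemma :
    ∃ C : ℝ, 0 < C ∧ ∀ r a n N N' : ℕ,
      0 < r → 0 < a → 0 < n → 0 < N → 0 < N' →
      2 * a ≤ r → ((r : ℝ) / a) ^ 2 ≤ (n : ℝ) →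
      (2 : ℝ) ^ (C * n * a ^ 2 / r * Real.logb 2 ((r : ℝ) / a)) * N' ≤ (N : ℝ) →
      ∀ χ : Sym2 (Fin N × Fin r) → Bool,
        (∀ x : Fin N, ∀ y y' : Fin r, y ≠ y' → χ s((x, y), (x, y')) = true) →
        HasBlueGridClique N r n χ ∨
          ∃ X : Finset (Fin N), X.card = N' ∧ ∃ x ∈ X, ∃ Y : Finset (Fin r),
            Y.card = a ∧ ∀ x' ∈ X, x' ≠ x → ∀ y ∈ Y,
              χ s((x, y), (x', y)) = true := by
  obtain ⟨C, hC, h⟩ := grid_iteration_lemma_general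
  exact ⟨C, hC, fun r a n N N' _ ha _ _ hN' har hn hN χ _ =>
    (h r a n N N' ha hN' har hn hN χ).imp_left fun ⟨_, hblue⟩ =>
      hasBlueGridClique_of_not_cliqueFree hblue⟩
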